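/- arXiv:2407.11903 — 2 statements merged into one kernel-verified Lean document; each statement's English description precedes it below -/
import Mathlib

section
/- (Pogorelov's interior C² estimate) For every n ≥ 2, κ ∈ (0,1), and δ > 0 there exists a constant C = C(n, κ, δ) > 0 with the following property: if w : ℝⁿ → ℝ is a smooth convex function such that det D²w(x) = 1 for all x in the open set Ω = {w < 0}, and the inclusions B_κ(0) ⊆ Ω ⊆ B_{1/κ}(0) hold, then ‖D²w(x)‖ ≤ C for every x with w(x) < −δ. -/
open Real

/-- Second partial derivative matrix (Hessian) of `w` at `x`. -/
noncomputable def hessianMatrix {n : ℕ} (w : EuclideanSpace ℝ (Fin n) → ℝ)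
    (x : EuclideanSpace ℝ (Fin n)) : Matrix (Fin n) (Fin n) ℝ :=
  Matrix.of fun i j =>
    fderiv ℝ (fun y => fderiv ℝ w y (EuclideanSpace.single j 1)) x (EuclideanSpace.single i 1)


namespace Pogo

/-- directional derivative -/
noncomputable def dd {n : ℕ} (v : EuclideanSpace ℝ (Fin n)) (f : EuclideanSpace ℝ (Fin n) → ℝ) :
    EuclideanSpace ℝ (Fin n) → ℝ := fun x => fderiv ℝ f x v

section basics
variable {n : ℕ} {f : EuclideanSpace ℝ (Fin n) → ℝ}

theorem dd_smooth (hf : ContDiff ℝ (⊤ : ℕ∞) f) (v : EuclideanSpace ℝ (Fin n)) :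
    ContDiff ℝ (⊤ : ℕ∞) (dd v f) := by
  unfold dd
  exact (hf.fderiv_right (m := (⊤ : ℕ∞)) (by simp)).clm_apply contDiff_const

theorem smooth_diff (hf : ContDiff ℝ (⊤ : ℕ∞) f) : Differentiable ℝ f :=
  hf.differentiable (by simp)

theorem dd_dd (hf : ContDiff ℝ (⊤ : ℕ∞) f) (u v x : EuclideanSpace ℝ (Fin n)) :
    dd u (dd v f) x = fderiv ℝ (fderiv ℝ f) x u v := by
  have h : DifferentiableAt ℝ (fderiv ℝ f) x :=
    (hf.fderiv_right (m := (⊤ : ℕ∞)) (by simp)).differentiable (by simp) x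
  have := (h.hasFDerivAt.clm_apply (hasFDerivAt_const v x)).fderiv
  unfold dd
  rw [this]
  simp

theorem dd_comm (hf : ContDiff ℝ (⊤ : ℕ∞) f) (u v : EuclideanSpace ℝ (Fin n)) :
    dd u (dd v f) = dd v (dd u f) := by
  ext x
  rw [dd_dd hf, dd_dd hf]
  have h := (hf.contDiffAt (x := x)).isSymmSndFDerivAt (by
    simp only [minSmoothness_of_isRCLikeNormedField]
    exact WithTop.coe_le_coe.2 le_top)
  exact h u v

theorem dd_line (hf : ContDiff ℝ (⊤ : ℕ∞) f) (x v : EuclideanSpace ℝ (Fin n)) (t : ℝ) :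
    HasDerivAt (fun s : ℝ => f (x + s • v)) (dd v f (x + t • v)) t := by
  have h1 : HasDerivAt (fun s : ℝ => x + s • v) v t := by
    simpa using ((hasDerivAt_id t).smul_const v).const_add x
  exact ((smooth_diff hf (x + t • v)).hasFDerivAt.comp_hasDerivAt t h1)

theorem dd_sum {ι : Type*} (s : Finset ι) (c : ι → ℝ)
    (v : ι → EuclideanSpace ℝ (Fin n)) (x : EuclideanSpace ℝ (Fin n)) :
    dd (∑ i ∈ s, c i • v i) f x = ∑ i ∈ s, c i * dd (v i) f x := by
  simp [dd, map_sum]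

theorem hess_bilin {w : EuclideanSpace ℝ (Fin n) → ℝ} (hw : ContDiff ℝ (⊤ : ℕ∞) w)
    (u v x : EuclideanSpace ℝ (Fin n)) :
    dd u (dd v w) x = u.ofLp ⬝ᵥ (hessianMatrix w x).mulVec v.ofLp := by
  have hv : ∀ v : EuclideanSpace ℝ (Fin n), v = ∑ i, v i • EuclideanSpace.single i (1:ℝ) := by
    intro v
    ext j
    simp [Finset.sum_apply, Pi.single_apply]
  have hH : ∀ i j, hessianMatrix w x i j =
      fderiv ℝ (fderiv ℝ w) x (EuclideanSpace.single i 1) (EuclideanSpace.single j 1) := by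
    intro i j
    rw [← dd_dd hw]; rfl
  rw [dd_dd hw]
  conv_lhs => rw [hv u, hv v]
  simp only [map_sum, map_smul, sum_apply, smul_apply,
    dotProduct, Matrix.mulVec, hH, smul_eq_mul, Finset.mul_sum]
  rw [Finset.sum_comm]
  refine Finset.sum_congr rfl fun i _ => Finset.sum_congr rfl fun j _ => ?_
  ring

theorem second_min {g g' : ℝ → ℝ} {g'' : ℝ} (h1 : ∀ᶠ t in nhds 0, HasDerivAt g (g' t) t)
    (h2 : HasDerivAt g' g'' 0) (hm : IsLocalMin g 0) : g' 0 = 0 ∧ 0 ≤ g'' := by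
  have h0 : g' 0 = 0 := hm.hasDerivAt_eq_zero h1.self_of_nhds
  refine ⟨h0, ?_⟩
  by_contra hneg
  push Not at hneg
  have hd : deriv g =ᶠ[nhds 0] g' := h1.mono fun t ht => ht.deriv
  have hdd : deriv (deriv g) 0 = g'' := by rw [hd.deriv_eq, h2.deriv]
  have hmax := isLocalMax_of_deriv_deriv_neg (f := g) (x₀ := 0) (by rw [hdd]; exact hneg)
    (by rw [hd.self_of_nhds, h0]) h1.self_of_nhds.continuousAt
  have hc : g =ᶠ[nhds 0] fun _ => g 0 := by
    filter_upwards [hm, hmax] with t h1 h2 using le_antisymm h2 h1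
  have : deriv (deriv g) 0 = 0 := by
    have h3 : deriv g =ᶠ[nhds 0] deriv (fun _ => g 0) := hc.deriv
    rw [h3.deriv_eq]; simp
  linarith

theorem tangent {w : EuclideanSpace ℝ (Fin n) → ℝ} (hw : ContDiff ℝ (⊤ : ℕ∞) w)
    (hc : ConvexOn ℝ Set.univ w) (x v : EuclideanSpace ℝ (Fin n)) :
    w x + dd v w x ≤ w (x + v) := by
  have h1 : ConvexOn ℝ Set.univ (fun s : ℝ => w (x + s • v)) := by
    refine ⟨convex_univ, fun a _ b _ p q hp hq hpq => ?_⟩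
    have := hc.2 (Set.mem_univ (x + a • v)) (Set.mem_univ (x + b • v)) hp hq hpq
    convert this using 2
    have : x = p • x + q • x := by rw [← add_smul, hpq, one_smul]
    simp only [smul_add, smul_eq_mul, add_smul, smul_smul]
    nth_rewrite 1 [this]
    abel
  have h2 := h1.le_slope_of_hasDerivAt (Set.mem_univ 0) (Set.mem_univ 1) one_pos
    (dd_line hw x v 0)
  simp [slope] at h2
  linarith

theorem hess_nonneg {w : EuclideanSpace ℝ (Fin n) → ℝ} (hw : ContDiff ℝ (⊤ : ℕ∞) w)
    (hc : ConvexOn ℝ Set.univ w) (x v : EuclideanSpace ℝ (Fin n)) :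
    0 ≤ dd v (dd v w) x := by
  have := second_min (g := fun t => w (x + t • v) - t * dd v w x)
    (g' := fun t => dd v w (x + t • v) - dd v w x) (g'' := dd v (dd v w) x)
    (Filter.Eventually.of_forall fun t => by
      have h := (dd_line hw x v t).sub ((hasDerivAt_id t).mul_const (dd v w x))
      rw [one_mul] at h
      exact h)
    (by simpa using (dd_line (dd_smooth hw v) x v 0).sub_const (dd v w x))
    (Filter.Eventually.of_forall fun t => by
      have := tangent hw hc x (t • v)
      have h3 : dd (t • v) w x = t * dd v w x := by simp [dd]
      simp only [zero_smul, add_zero, zero_mul, sub_zero]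
      linarith)
  exact this.2

theorem hess_psd {w : EuclideanSpace ℝ (Fin n) → ℝ} (hw : ContDiff ℝ (⊤ : ℕ∞) w)
    (hc : ConvexOn ℝ Set.univ w) (x : EuclideanSpace ℝ (Fin n)) :
    (hessianMatrix w x).PosSemidef := by
  refine Matrix.PosSemidef.of_dotProduct_mulVec_nonneg ?_ ?_
  · ext i j
    have := congrFun (dd_comm hw (EuclideanSpace.single j 1) (EuclideanSpace.single i 1)) x
    simp only [Matrix.conjTranspose_apply, star_trivial]
    exact this
  · intro v
    have := hess_nonneg hw hc x (WithLp.toLp 2 v)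
    rw [hess_bilin hw] at this
    simpa using this

end basics

open scoped MatrixOrder in
theorem psd_factor {n : ℕ} {A : Matrix (Fin n) (Fin n) ℝ} (hA : A.PosSemidef) :
    ∃ C : Matrix (Fin n) (Fin n) ℝ, A = C.transpose * C := by
  refine ⟨CFC.sqrt A, ?_⟩
  have h1 : (CFC.sqrt A).PosSemidef := Matrix.nonneg_iff_posSemidef.1 (CFC.sqrt_nonneg A)
  have h2 : (CFC.sqrt A).transpose = CFC.sqrt A := by
    have := h1.1
    rwa [Matrix.IsHermitian, Matrix.conjTranspose_eq_transpose_of_trivial] at this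
  rw [h2, CFC.sqrt_mul_sqrt_self A hA.nonneg]

theorem psd_trace {n : ℕ} {A : Matrix (Fin n) (Fin n) ℝ} (hA : A.PosSemidef) (hd : A.det = 1) :
    (n : ℝ) ≤ A.trace := by
  have hp : A.PosDef := hA.posDef_iff_det_ne_zero.2 (by rw [hd]; norm_num)
  have h1 := hp.1.det_eq_prod_eigenvalues
  have h2 := hp.1.trace_eq_sum_eigenvalues
  simp only [RCLike.ofReal_real_eq_id, id] at h1 h2
  have h3 : ∑ i, Real.log (hp.1.eigenvalues i) = 0 := by
    rw [← Real.log_prod (fun i _ => (hp.eigenvalues_pos i).ne'), ← h1, hd, Real.log_one]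
  have h4 : ∑ i, Real.log (hp.1.eigenvalues i) ≤ ∑ i, (hp.1.eigenvalues i - 1) :=
    Finset.sum_le_sum fun i _ => Real.log_le_sub_one_of_pos (hp.eigenvalues_pos i)
  rw [Finset.sum_sub_distrib] at h4
  simp at h4
  rw [h2]; linarith

theorem psd_trace_mul {n : ℕ} {A B : Matrix (Fin n) (Fin n) ℝ} (hA : A.PosSemidef)
    (hd : A.det = 1) (hB : B.PosSemidef) (hdB : B.det = 1) :
    (n : ℝ) ≤ (A * B).trace := by
  obtain ⟨C, hC⟩ := psd_factor hB
  have h1 : (C * A * C.transpose).PosSemidef := by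
    simpa using hA.mul_mul_conjTranspose_same C
  have h2 : (C * A * C.transpose).det = 1 := by
    rw [Matrix.det_mul, Matrix.det_mul, hd, Matrix.det_transpose]
    rw [hC, Matrix.det_mul, Matrix.det_transpose] at hdB
    linarith
  have h3 := psd_trace h1 h2
  rwa [Matrix.mul_assoc, Matrix.trace_mul_comm, Matrix.mul_assoc, ← hC] at h3

end Pogo

namespace Pogo
open scoped RealInnerProductSpace

theorem comp {n : ℕ} {w b : EuclideanSpace ℝ (Fin n) → ℝ} {R ε K : ℝ}
    {ν : EuclideanSpace ℝ (Fin n)} (hn : 2 ≤ n)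
    (hw : ContDiff ℝ (⊤ : ℕ∞) w) (hc : ConvexOn ℝ Set.univ w)
    (hdet : ∀ x, w x < 0 → (hessianMatrix w x).det = 1)
    (hR : {x | w x < 0} ⊆ Metric.ball (0 : EuclideanSpace ℝ (Fin n)) R)
    (hε : 0 < ε) (hK : 0 ≤ K) (hν : ‖ν‖ = 1) (hbc : Continuous b)
    (hb : ∀ y v, ∃ c : ℝ, ∀ t : ℝ, b (y + t • v) =
      b y + c * t + t ^ 2 * (ε * ‖v‖ ^ 2 + K / 2 * ⟪ν, v⟫ ^ 2))
    (hbn : ∀ y, w y < 0 → b y ≤ 0)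
    (hgt : 1 < (2 * ε) ^ (n - 1) * (2 * ε + K / n)) :
    ∀ x, w x < 0 → b x ≤ w x := by
  intro x hx
  have hcomp : IsCompact (closure {x | w x < 0}) :=
    (Metric.isBounded_ball.subset hR).isCompact_closure
  obtain ⟨z, hz, hmin⟩ := hcomp.exists_isMinOn ⟨x, subset_closure hx⟩
    (hw.continuous.sub hbc).continuousOn
  have hxz : w z - b z ≤ w x - b x := hmin (subset_closure hx)
  by_cases hwz : w z < 0
  · exfalso
    have hopen : IsOpen {x | w x < 0} := isOpen_lt hw.continuous continuous_const
    have key : ∀ v, 2 * ε * ‖v‖ ^ 2 + K * ⟪ν, v⟫ ^ 2 ≤ dd v (dd v w) z := by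
      intro v
      obtain ⟨c, hcv⟩ := hb z v
      set q := ε * ‖v‖ ^ 2 + K / 2 * ⟪ν, v⟫ ^ 2 with hq
      have hder : ∀ t : ℝ, HasDerivAt (fun t : ℝ => b z + c * t + t ^ 2 * q) (c + 2 * t * q) t := by
        intro t
        have h := (((hasDerivAt_id t).const_mul c).const_add (b z)).add
          (((hasDerivAt_id t).pow 2).mul_const q)
        refine h.congr_deriv ?_
        simp
      have hder2 : HasDerivAt (fun t : ℝ => c + 2 * t * q) (2 * q) 0 := by
        have h := ((((hasDerivAt_id (0:ℝ)).const_mul 2).mul_const q).const_add c)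
        refine h.congr_deriv ?_
        simp
      have := second_min (g := fun t => w (z + t • v) - (b z + c * t + t ^ 2 * q))
        (g' := fun t => dd v w (z + t • v) - (c + 2 * t * q))
        (g'' := dd v (dd v w) z - 2 * q)
        (Filter.Eventually.of_forall fun t => (dd_line hw z v t).sub (hder t))
        (by
          have h := (dd_line (dd_smooth hw v) z v 0).sub hder2
          rw [zero_smul, add_zero] at h
          exact h)
        (by
          have hcont : Continuous fun t : ℝ => z + t • v := by fun_prop
          have : ∀ᶠ t : ℝ in nhds 0, z + t • v ∈ {x | w x < 0} :=
            hcont.continuousAt.eventually_mem (hopen.mem_nhds (by simpa using hwz))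
          filter_upwards [this] with t ht
          have h := hmin (subset_closure ht)
          have h' : w z - b z ≤ w (z + t • v) - b (z + t • v) := h
          rw [hcv t] at h'
          have h0 : b z + c * 0 + 0 ^ 2 * q = b z := by ring
          simp only [zero_smul, add_zero]
          first
            | exact h'
            | (rw [h0]; exact h'))
      linarith [this.2]
    have hH : (hessianMatrix w z).IsHermitian := (hess_psd hw hc z).1
    have heig : ∀ i, 2 * ε + K * ⟪ν, hH.eigenvectorBasis i⟫ ^ 2 ≤ hH.eigenvalues i := by
      intro i
      have h1 := key (hH.eigenvectorBasis i)
      rw [hess_bilin hw, hH.mulVec_eigenvectorBasis] at h1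
      have hn1 : ‖hH.eigenvectorBasis i‖ = 1 := hH.eigenvectorBasis.orthonormal.1 i
      have h2 : (hH.eigenvectorBasis i).ofLp ⬝ᵥ (hH.eigenvectorBasis i).ofLp = 1 := by
        have := real_inner_self_eq_norm_sq (hH.eigenvectorBasis i)
        rw [hn1, PiLp.inner_apply] at this
        simp only [dotProduct]
        rw [one_pow] at this
        rw [← this]
        rfl
      rw [dotProduct_smul, h2, hn1] at h1
      simpa using h1
    have hsum : ∑ i, ⟪ν, hH.eigenvectorBasis i⟫ ^ 2 = 1 := by
      have := hH.eigenvectorBasis.sum_sq_norm_inner_left ν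
      rw [hν] at this
      simpa using this
    obtain ⟨i, hi⟩ : ∃ i, (1:ℝ) / n ≤ ⟪ν, hH.eigenvectorBasis i⟫ ^ 2 := by
      by_contra hcon
      push Not at hcon
      have hnn : (0:ℝ) < n := by positivity
      have : ∑ i, ⟪ν, hH.eigenvectorBasis i⟫ ^ 2 < ∑ i : Fin n, (1:ℝ) / n :=
        Finset.sum_lt_sum_of_nonempty ⟨⟨0, by omega⟩, Finset.mem_univ _⟩ fun i _ => hcon i
      rw [hsum] at this
      simp at this
      rw [mul_inv_cancel₀ hnn.ne'] at this
      exact lt_irrefl _ this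
    have hprod := hH.det_eq_prod_eigenvalues
    rw [hdet z hwz] at hprod
    simp only [RCLike.ofReal_real_eq_id, id] at hprod
    rw [← Finset.mul_prod_erase _ _ (Finset.mem_univ i)] at hprod
    have hp2 : (2 * ε) ^ (n - 1) ≤ ∏ j ∈ Finset.univ.erase i, hH.eigenvalues j := by
      have : (2 * ε) ^ (n - 1) = ∏ j ∈ Finset.univ.erase i, (2 * ε) := by
        simp [Finset.card_erase_of_mem]
      rw [this]
      refine Finset.prod_le_prod (fun _ _ => by positivity) fun j _ => ?_
      have := heig j
      nlinarith [mul_nonneg hK (sq_nonneg ⟪ν, hH.eigenvectorBasis j⟫)]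
    have hp1 : 2 * ε + K / n ≤ hH.eigenvalues i := by
      have h1 := heig i
      have h2 := mul_le_mul_of_nonneg_left hi hK
      have h3 : K * (1 / n) = K / n := by ring
      linarith
    have hpos : 0 ≤ K / n := by positivity
    have := mul_le_mul hp2 hp1 (by positivity) (le_trans (by positivity) hp2)
    linarith
  · have hbz : b z ≤ 0 := by
      have : closure {x | w x < 0} ⊆ {x | b x ≤ 0} :=
        closure_minimal hbn (isClosed_le hbc continuous_const)
      exact this hz
    linarith

theorem lower {n : ℕ} {w : EuclideanSpace ℝ (Fin n) → ℝ} {R : ℝ} (hn : 2 ≤ n)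
    (hw : ContDiff ℝ (⊤ : ℕ∞) w) (hc : ConvexOn ℝ Set.univ w)
    (hdet : ∀ x, w x < 0 → (hessianMatrix w x).det = 1)
    (hR : {x | w x < 0} ⊆ Metric.ball (0 : EuclideanSpace ℝ (Fin n)) R) :
    ∀ x, w x < 0 → -R ^ 2 ≤ w x := by
  intro x hx
  have := comp (b := fun y => ‖y‖ ^ 2 - R ^ 2) (ε := 1) (K := 0)
    (ν := EuclideanSpace.single ⟨0, by omega⟩ 1) hn hw hc hdet hR one_pos le_rfl (by simp)
    (by fun_prop)
    (fun y v => ⟨2 * ⟪y, v⟫, fun t => by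
      rw [norm_add_sq_real, norm_smul, inner_smul_right, mul_pow]
      simp only [Real.norm_eq_abs, sq_abs]
      ring⟩)
    (fun y hy => by
      have h := hR hy
      rw [mem_ball_zero_iff] at h
      have := pow_le_pow_left₀ (norm_nonneg y) h.le 2
      linarith)
    (by
      simp only [mul_one, zero_div, add_zero]
      exact one_lt_mul_of_le_of_lt (one_le_pow₀ (by norm_num)) (by norm_num)) x hx
  have h2 := sq_nonneg ‖x‖
  linarith

theorem grad_bound (n : ℕ) (hn : 2 ≤ n) (R δ : ℝ) (hR0 : 0 < R) (hδ : 0 < δ) :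
    ∃ G : ℝ, 0 ≤ G ∧ ∀ w : EuclideanSpace ℝ (Fin n) → ℝ, ContDiff ℝ (⊤ : ℕ∞) w →
      ConvexOn ℝ Set.univ w →
      (∀ x, w x < 0 → (hessianMatrix w x).det = 1) →
      {x | w x < 0} ⊆ Metric.ball (0 : EuclideanSpace ℝ (Fin n)) R →
      ∀ x, w x ≤ -δ → ∀ v, ‖v‖ = 1 → |dd v w x| ≤ G := by
  set ε := δ / (2 * R ^ 2) with hεd
  have hε : 0 < ε := by positivity
  set K := (n : ℝ) / (2 * ε) ^ (n - 1) with hKd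
  have hn0 : (0:ℝ) < n := by positivity
  have hK : 0 < K := by positivity
  set D := R ^ 2 + 2 * R with hD
  have hD0 : 0 < D := by positivity
  refine ⟨1 + K * D * R ^ 2 / δ, by positivity, ?_⟩
  intro w hw hc hdet hR x hx v hv
  have hx0 : w x < 0 := by linarith
  set g := (InnerProductSpace.toDual ℝ (EuclideanSpace ℝ (Fin n))).symm (fderiv ℝ w x) with hg
  have hgv : ∀ v, dd v w x = ⟪g, v⟫ := by
    intro v
    rw [hg, InnerProductSpace.toDual_symm_apply]; rfl
  have h1 : |dd v w x| ≤ ‖g‖ := by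
    rw [hgv]
    simpa [hv] using abs_real_inner_le_norm g v
  refine h1.trans ?_
  by_cases hg1 : ‖g‖ ≤ 1
  · have : 0 ≤ K * D * R ^ 2 / δ := by positivity
    linarith
  push Not at hg1
  have hg0 : 0 < ‖g‖ := by linarith
  set M := - w x with hM
  have hMR : M ≤ R ^ 2 := by linarith [lower hn hw hc hdet hR x hx0]
  have hM0 : 0 < M := by linarith
  set ν := ‖g‖⁻¹ • g with hνd
  have hν : ‖ν‖ = 1 := by
    rw [hνd, norm_smul, norm_inv, norm_norm, inv_mul_cancel₀ hg0.ne']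
  have hgν : ∀ y, ⟪g, y⟫ = ‖g‖ * ⟪ν, y⟫ := by
    intro y
    rw [hνd, real_inner_smul_left, ← mul_assoc, mul_inv_cancel₀ hg0.ne', one_mul]
  have hxR : ‖x‖ < R := by simpa using hR hx0
  have hl0 : ∀ y, w y < 0 → 0 ≤ M / ‖g‖ - ⟪ν, y - x⟫ := by
    intro y hy
    have := tangent hw hc x (y - x)
    rw [add_sub_cancel, hgv, hgν] at this
    have h3 : ‖g‖ * ⟪ν, y - x⟫ ≤ M := by linarith
    rw [sub_nonneg, le_div_iff₀ hg0]
    linarith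
  have hlD : ∀ y, w y < 0 → M / ‖g‖ - ⟪ν, y - x⟫ ≤ D := by
    intro y hy
    have hyR : ‖y‖ < R := by simpa using hR hy
    have h3 : |⟪ν, y - x⟫| ≤ ‖y - x‖ := by simpa [hν] using abs_real_inner_le_norm ν (y - x)
    have h4 := norm_sub_le y x
    have h5 := neg_abs_le ⟪ν, y - x⟫
    have h6 : M / ‖g‖ ≤ M := div_le_self hM0.le hg1.le
    linarith
  have hmain := comp (b := fun y => ε * (‖y‖ ^ 2 - R ^ 2) + K / 2 *
      ((M / ‖g‖ - ⟪ν, y - x⟫) ^ 2 - D * (M / ‖g‖ - ⟪ν, y - x⟫))) (ε := ε) (K := K)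
    (ν := ν) hn hw hc hdet hR hε hK.le hν
    (by fun_prop)
    (fun y v => ⟨ε * (2 * ⟪y, v⟫) + K / 2 * (-2 * (M / ‖g‖ - ⟪ν, y - x⟫) * ⟪ν, v⟫ + D * ⟪ν, v⟫),
      fun t => by
      have h3 : y + t • v - x = (y - x) + t • v := by abel
      rw [norm_add_sq_real, norm_smul, inner_smul_right, mul_pow, h3, inner_add_right,
        inner_smul_right]
      simp only [Real.norm_eq_abs, sq_abs]
      ring⟩)
    (fun y hy => by
      have h := hR hy
      rw [mem_ball_zero_iff] at h
      have h3 := pow_le_pow_left₀ (norm_nonneg y) h.le 2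
      have h4 : ε * (‖y‖ ^ 2 - R ^ 2) ≤ 0 := mul_nonpos_of_nonneg_of_nonpos hε.le (by linarith)
      have h5 : (M / ‖g‖ - ⟪ν, y - x⟫) ^ 2 - D * (M / ‖g‖ - ⟪ν, y - x⟫) ≤ 0 := by
        nlinarith [hl0 y hy, hlD y hy]
      have h6 := mul_nonpos_of_nonneg_of_nonpos (half_pos hK).le h5
      linarith)
    (by
      have h3 : (2 * ε) ^ (n - 1) * (K / n) = 1 := by
        rw [hKd]; field_simp
      rw [mul_add, h3]
      have : 0 < (2 * ε) ^ (n - 1) * (2 * ε) := by positivity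
      linarith) x hx0
  simp only [sub_self, inner_zero_right, sub_zero] at hmain
  have h7 : ε * R ^ 2 = δ / 2 := by
    rw [hεd]; field_simp
  have h8 : 0 ≤ ε * ‖x‖ ^ 2 := by positivity
  have h9 : 0 ≤ K / 2 * (M / ‖g‖) ^ 2 := by positivity
  have h10 : δ ≤ K * D * (M / ‖g‖) := by nlinarith
  have h11 : K * D * (M / ‖g‖) ≤ K * D * (R ^ 2 / ‖g‖) := by gcongr
  have h12 : δ * ‖g‖ ≤ K * D * R ^ 2 := by
    have : δ ≤ K * D * R ^ 2 / ‖g‖ := by rw [mul_div_assoc]; linarith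
    rwa [le_div_iff₀ hg0] at this
  have h13 : ‖g‖ ≤ K * D * R ^ 2 / δ := by
    rw [le_div_iff₀ hδ]; linarith
  linarith

end Pogo

namespace Pogo
open scoped RealInnerProductSpace

theorem onemax {p p' q q' r r' : ℝ → ℝ} {p'' q'' r'' : ℝ}
    (hp : ∀ t, HasDerivAt p (p' t) t) (hp' : HasDerivAt p' p'' 0)
    (hq : ∀ t, HasDerivAt q (q' t) t) (hq' : HasDerivAt q' q'' 0)
    (hr : ∀ t, HasDerivAt r (r' t) t) (hr' : HasDerivAt r' r'' 0)
    (p0 : 0 < p 0) (q0 : 0 < q 0)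
    (hmax : IsLocalMax (fun t => p t * q t * Real.exp (r t ^ 2 / 2)) 0) :
    p' 0 / p 0 + q' 0 / q 0 + r 0 * r' 0 = 0 ∧
    p'' / p 0 - (p' 0 / p 0) ^ 2 + (q'' / q 0 - (q' 0 / q 0) ^ 2) + (r' 0 ^ 2 + r 0 * r'') ≤ 0 := by
  have ep : ∀ᶠ t in nhds (0:ℝ), 0 < p t := (hp 0).continuousAt.eventually_const_lt p0
  have eq : ∀ᶠ t in nhds (0:ℝ), 0 < q t := (hq 0).continuousAt.eventually_const_lt q0
  have hder : ∀ t, 0 < p t → 0 < q t →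
      HasDerivAt (fun t => -(Real.log (p t) + Real.log (q t) + r t ^ 2 / 2))
      (-(p' t / p t + q' t / q t + r t * r' t)) t := by
    intro t h1 h2
    have h := ((((hp t).log h1.ne').add ((hq t).log h2.ne')).add (((hr t).pow 2).div_const 2)).neg
    refine h.congr_deriv ?_
    simp only [Nat.cast_ofNat]
    ring
  have hder2 : HasDerivAt (fun t => -(p' t / p t + q' t / q t + r t * r' t))
      (-(p'' / p 0 - (p' 0 / p 0) ^ 2 + (q'' / q 0 - (q' 0 / q 0) ^ 2) + (r' 0 ^ 2 + r 0 * r'')))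
      0 := by
    have h := (((hp'.div (hp 0) p0.ne').add (hq'.div (hq 0) q0.ne')).add ((hr 0).mul hr')).neg
    refine h.congr_deriv ?_
    field_simp
  have := second_min (by filter_upwards [ep, eq] with t h1 h2 using hder t h1 h2) hder2 (by
    filter_upwards [ep, eq, hmax] with t h1 h2 h3
    have h4 := Real.log_le_log (by positivity) h3
    rw [Real.log_mul (by positivity) (by positivity), Real.log_mul h1.ne' h2.ne', Real.log_exp,
      Real.log_mul (by positivity) (by positivity), Real.log_mul p0.ne' q0.ne', Real.log_exp] at h4
    linarith)
  constructor
  · linarith [this.1]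
  · linarith [this.2]

theorem sym_ineq {n : ℕ} (S : Fin n → Fin n → ℝ) (hS : ∀ i j, S i j = S j i) (c y : Fin n → ℝ)
    (b : ℝ) (hb : 0 < b) (hbc : ∑ i, c i ^ 2 = b) (hy : ∀ i, y i = ∑ j, c j * S i j) :
    2 * (∑ i, y i ^ 2) / b - (∑ i, c i * y i) ^ 2 / b ^ 2 ≤ ∑ i, ∑ j, S i j * S j i := by
  set Y := ∑ i, y i ^ 2 with hY
  set Q := ∑ i, c i * y i with hQ
  set a := b⁻¹ with ha
  have hab : a * b = 1 := inv_mul_cancel₀ hb.ne'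
  have e1 : ∑ i, ∑ j, S i j * (y i * c j) = Y := by
    rw [hY]
    refine Finset.sum_congr rfl fun i _ => ?_
    rw [sq]
    nth_rewrite 3 [hy i]
    rw [Finset.mul_sum]
    exact Finset.sum_congr rfl fun j _ => by ring
  have e2 : ∑ i, ∑ j, S i j * (c i * y j) = Y := by
    rw [← e1, Finset.sum_comm]
    exact Finset.sum_congr rfl fun i _ => Finset.sum_congr rfl fun j _ => by rw [hS]; ring
  have e3 : ∑ i, ∑ j, S i j * (c i * c j) = Q := by
    rw [hQ]
    refine Finset.sum_congr rfl fun i _ => ?_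
    rw [hy i, Finset.mul_sum]
    exact Finset.sum_congr rfl fun j _ => by ring
  have key : 0 ≤ ∑ i, ∑ j, (S i j - a * (c i * y j) - a * (y i * c j)
      + a ^ 2 * Q * (c i * c j)) ^ 2 :=
    Finset.sum_nonneg fun i _ => Finset.sum_nonneg fun j _ => sq_nonneg _
  have hexp : ∀ i j, (S i j - a * (c i * y j) - a * (y i * c j) + a ^ 2 * Q * (c i * c j)) ^ 2 =
      S i j * S j i - 2 * a * (S i j * (c i * y j)) - 2 * a * (S i j * (y i * c j))
      + 2 * a ^ 2 * Q * (S i j * (c i * c j)) + a ^ 2 * (c i ^ 2 * y j ^ 2)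
      + a ^ 2 * (y i ^ 2 * c j ^ 2) + a ^ 4 * Q ^ 2 * (c i ^ 2 * c j ^ 2)
      + 2 * a ^ 2 * ((c i * y i) * (c j * y j)) - 2 * a ^ 3 * Q * (c i ^ 2 * (c j * y j))
      - 2 * a ^ 3 * Q * ((c i * y i) * c j ^ 2) := by
    intro i j
    rw [← hS i j]; ring
  simp only [hexp, Finset.sum_add_distrib, Finset.sum_sub_distrib, ← Finset.mul_sum, e1, e2, e3,
    ← Finset.sum_mul, hbc, ← hY, ← hQ] at key
  have hfin : 2 * Y / b - Q ^ 2 / b ^ 2 = 2 * a * Y - a ^ 2 * Q ^ 2 := by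
    rw [ha]; field_simp
  rw [hfin]
  have k1 : a ^ 2 * (b * Y) = a * Y := by linear_combination a * Y * hab
  have k2 : a ^ 2 * (Y * b) = a * Y := by linear_combination a * Y * hab
  have k3 : a ^ 4 * Q ^ 2 * (b * b) = a ^ 2 * Q ^ 2 := by
    linear_combination a ^ 2 * Q ^ 2 * (a * b + 1) * hab
  have k4 : 2 * a ^ 3 * Q * (b * Q) = 2 * a ^ 2 * Q ^ 2 := by
    linear_combination 2 * a ^ 2 * Q ^ 2 * hab
  have k5 : 2 * a ^ 3 * Q * (Q * b) = 2 * a ^ 2 * Q ^ 2 := by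
    linear_combination 2 * a ^ 2 * Q ^ 2 * hab
  rw [k1, k2, k3, k4, k5] at key
  linarith

theorem exists_frame {n : ℕ} {w : EuclideanSpace ℝ (Fin n) → ℝ}
    (hw : ContDiff ℝ (⊤ : ℕ∞) w) (hc : ConvexOn ℝ Set.univ w) (x : EuclideanSpace ℝ (Fin n))
    (hd : (hessianMatrix w x).det = 1) (e : EuclideanSpace ℝ (Fin n)) :
    ∃ v : Fin n → EuclideanSpace ℝ (Fin n),
      (∀ i j, dd (v i) (dd (v j) w) x = if i = j then 1 else 0) ∧
      ∃ c : Fin n → ℝ, e = ∑ i, c i • v i := by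
  obtain ⟨C, hC⟩ := psd_factor (hess_psd hw hc x)
  have hCu : IsUnit C.det := by
    rw [hC, Matrix.det_mul, Matrix.det_transpose] at hd
    exact IsUnit.of_mul_eq_one _ hd
  refine ⟨fun i => WithLp.toLp 2 (fun k => C⁻¹ k i), ?_, C.mulVec e.ofLp, ?_⟩
  · intro i j
    rw [hess_bilin hw]
    have h1 : ((C⁻¹).transpose * (hessianMatrix w x * C⁻¹)) i j = (1 : Matrix (Fin n) (Fin n) ℝ) i j := by
      rw [hC, Matrix.mul_assoc, Matrix.mul_nonsing_inv _ hCu, Matrix.mul_one,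
        ← Matrix.transpose_mul, Matrix.mul_nonsing_inv _ hCu, Matrix.transpose_one]
    rw [Matrix.one_apply] at h1
    rw [← h1]
    rfl
  · have h1 : (C⁻¹).mulVec (C.mulVec e.ofLp) = e.ofLp := by
      rw [Matrix.mulVec_mulVec, Matrix.nonsing_inv_mul _ hCu, Matrix.one_mulVec]
    ext k
    have h2 := congrFun h1 k
    rw [← h2]
    simp only [WithLp.ofLp_sum, WithLp.ofLp_smul, Finset.sum_apply, Pi.smul_apply, smul_eq_mul]
    rw [Matrix.mulVec, dotProduct]
    exact Finset.sum_congr rfl fun i _ => mul_comm _ _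

theorem trace_facts {n : ℕ} {w : EuclideanSpace ℝ (Fin n) → ℝ}
    (hw : ContDiff ℝ (⊤ : ℕ∞) w) (hc : ConvexOn ℝ Set.univ w)
    (hdet : ∀ x, w x < 0 → (hessianMatrix w x).det = 1) (x : EuclideanSpace ℝ (Fin n))
    (hx : w x < 0) (e : EuclideanSpace ℝ (Fin n)) (v : Fin n → EuclideanSpace ℝ (Fin n))
    (hv : ∀ i j, dd (v i) (dd (v j) w) x = if i = j then 1 else 0) :
    ∑ i, dd e (dd (v i) (dd (v i) w)) x = 0 ∧
    ∑ i, ∑ j, dd e (dd (v i) (dd (v j) w)) x * dd e (dd (v j) (dd (v i) w)) x ≤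
      ∑ i, dd e (dd e (dd (v i) (dd (v i) w))) x := by
  set V : Matrix (Fin n) (Fin n) ℝ := Matrix.of fun k i => v i k with hV
  set M : ℝ → Matrix (Fin n) (Fin n) ℝ :=
    fun t => V.transpose * (hessianMatrix w (x + t • e) * V) with hM
  have hMe : ∀ t i j, M t i j = dd (v i) (dd (v j) w) (x + t • e) := by
    intro t i j
    rw [hess_bilin hw]
    rfl
  have hM0 : M 0 = 1 := by
    ext i j
    rw [hMe, zero_smul, add_zero, hv, Matrix.one_apply]
  have hVd : V.det * V.det = 1 := by
    have := congrArg Matrix.det hM0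
    rw [hM] at this
    simp only [zero_smul, add_zero, Matrix.det_mul, Matrix.det_transpose, hdet x hx,
      Matrix.det_one, one_mul] at this
    exact this
  have hMp : ∀ t, (M t).PosSemidef := by
    intro t
    have := (hess_psd hw hc (x + t • e)).conjTranspose_mul_mul_same V
    rw [Matrix.conjTranspose_eq_transpose_of_trivial, Matrix.mul_assoc] at this
    exact this
  have hcont : Continuous fun t : ℝ => w (x + t • e) :=
    hw.continuous.comp (by fun_prop)
  have hev : ∀ᶠ t : ℝ in nhds 0, (M t).det = 1 := by
    have : ∀ᶠ t : ℝ in nhds 0, w (x + t • e) < 0 :=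
      hcont.continuousAt.eventually_lt_const (by simpa using hx)
    filter_upwards [this] with t ht
    rw [hM]
    simp only [Matrix.det_mul, Matrix.det_transpose, hdet _ ht, one_mul]
    exact hVd
  have hev' : ∀ᶠ t : ℝ in nhds 0, (M (-t)).det = 1 := by
    have h : Filter.Tendsto (fun t : ℝ => -t) (nhds 0) (nhds 0) := by
      simpa using (continuous_neg (G := ℝ)).tendsto 0
    exact h.eventually hev
  have hsm : ∀ i j, ContDiff ℝ (⊤ : ℕ∞) (dd (v i) (dd (v j) w)) := fun i j =>
    dd_smooth (dd_smooth hw _) _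
  set m : Fin n → Fin n → ℝ → ℝ := fun i j t => dd (v i) (dd (v j) w) (x + t • e) with hm
  set m1 : Fin n → Fin n → ℝ → ℝ := fun i j t => dd e (dd (v i) (dd (v j) w)) (x + t • e) with hm1
  set m2 : Fin n → Fin n → ℝ → ℝ :=
    fun i j t => dd e (dd e (dd (v i) (dd (v j) w))) (x + t • e) with hm2
  have hd1 : ∀ i j t, HasDerivAt (m i j) (m1 i j t) t := fun i j t => dd_line (hsm i j) x e t
  have hd2 : ∀ i j t, HasDerivAt (m1 i j) (m2 i j t) t := fun i j t =>
    dd_line (dd_smooth (hsm i j) e) x e t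
  have hneg : ∀ {f f' : ℝ → ℝ}, (∀ t, HasDerivAt f (f' t) t) →
      ∀ t, HasDerivAt (fun s => f (-s)) (-(f' (-t))) t := by
    intro f f' h t
    have := (h (-t)).comp t (hasDerivAt_neg t)
    rw [mul_neg_one] at this
    exact this
  have hm0 : ∀ i j, m i j 0 = if i = j then 1 else 0 := by
    intro i j
    simp only [hm, zero_smul, add_zero]
    exact hv i j
  have hz1 : ∀ i j, m1 i j 0 = dd e (dd (v i) (dd (v j) w)) x := by
    intro i j
    simp only [hm1, zero_smul, add_zero]
  have hz2 : ∀ i j, m2 i j 0 = dd e (dd e (dd (v i) (dd (v j) w))) x := by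
    intro i j
    simp only [hm2, zero_smul, add_zero]
  constructor
  · have hmin : IsLocalMin (fun t => ∑ i, m i i t) 0 := by
      filter_upwards [hev] with t ht
      have := psd_trace (hMp t) ht
      simp only [Matrix.trace, Matrix.diag, hMe] at this
      simp only [hm0]
      simpa using this
    have hD : HasDerivAt (fun t => ∑ i, m i i t) (∑ i, m1 i i 0) 0 :=
      HasDerivAt.fun_sum fun i _ => hd1 i i 0
    have := hmin.hasDerivAt_eq_zero hD
    simpa only [hz1] using this
  · have hmin : IsLocalMin (fun t => ∑ i, ∑ j, m i j t * m j i (-t)) 0 := by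
      filter_upwards [hev, hev'] with t ht ht'
      have := psd_trace_mul (hMp t) ht (hMp (-t)) ht'
      simp only [Matrix.trace, Matrix.diag, Matrix.mul_apply, hMe] at this
      simp only [neg_zero, hm0]
      refine le_trans ?_ this
      simp
    have hD : ∀ t, HasDerivAt (fun t => ∑ i, ∑ j, m i j t * m j i (-t))
        (∑ i, ∑ j, (m1 i j t * m j i (-t) + m i j t * -(m1 j i (-t)))) t := fun t =>
      HasDerivAt.fun_sum fun i _ => HasDerivAt.fun_sum fun j _ =>
        (hd1 i j t).mul (hneg (hd1 j i) t)
    have hD2 : HasDerivAt (fun t => ∑ i, ∑ j, (m1 i j t * m j i (-t) + m i j t * -(m1 j i (-t))))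
        (∑ i, ∑ j, ((m2 i j 0 * m j i (-0) + m1 i j 0 * -(m1 j i (-0))) +
          (m1 i j 0 * -(m1 j i (-0)) + m i j 0 * -(-(m2 j i (-0)))))) 0 :=
      HasDerivAt.fun_sum fun i _ => HasDerivAt.fun_sum fun j _ =>
        ((hd2 i j 0).mul (hneg (hd1 j i) 0)).add
          ((hd1 i j 0).mul (hneg (hd2 j i) 0).neg)
    have := (second_min (Filter.Eventually.of_forall hD) hD2 hmin).2
    simp only [neg_zero, hm0, hz1, hz2] at this
    have hs : ∀ i j : Fin n, ((dd e (dd e (dd (v i) (dd (v j) w))) x * (if j = i then 1 else 0) +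
        dd e (dd (v i) (dd (v j) w)) x * -dd e (dd (v j) (dd (v i) w)) x) +
        (dd e (dd (v i) (dd (v j) w)) x * -dd e (dd (v j) (dd (v i) w)) x +
        (if i = j then 1 else 0) * - -dd e (dd e (dd (v j) (dd (v i) w))) x)) =
        2 * (if i = j then dd e (dd e (dd (v i) (dd (v j) w))) x else 0) -
        2 * (dd e (dd (v i) (dd (v j) w)) x * dd e (dd (v j) (dd (v i) w)) x) := by
      intro i j
      by_cases h : i = j
      · subst h; simp; ring
      · simp [h, Ne.symm h]; ring
    simp only [hs, Finset.sum_sub_distrib, ← Finset.mul_sum] at this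
    simp only [Finset.sum_ite_eq, Finset.mem_univ, if_true] at this
    linarith

end Pogo

namespace Pogo
open scoped RealInnerProductSpace

theorem core {n : ℕ} {w : EuclideanSpace ℝ (Fin n) → ℝ}
    (hw : ContDiff ℝ (⊤ : ℕ∞) w) (hc : ConvexOn ℝ Set.univ w)
    (hdet : ∀ x, w x < 0 → (hessianMatrix w x).det = 1) (z e : EuclideanSpace ℝ (Fin n))
    (hz : w z < 0) (η : ℝ) (hp : 0 < -w z - η) (hb : 0 < dd e (dd e w) z)
    (hmax : IsLocalMax (fun x => (-w x - η) * dd e (dd e w) x * Real.exp (dd e w x ^ 2 / 2)) z) :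
    ((-w z - η) * dd e (dd e w) z) ^ 2 ≤
      n * ((-w z - η) * dd e (dd e w) z) + (dd e w z) ^ 2 := by
  obtain ⟨v, hv, c, hec⟩ := exists_frame hw hc z (hdet z hz) e
  obtain ⟨ht1, ht2⟩ := trace_facts hw hc hdet z hz e v hv
  set p := -w z - η with hpd
  set b := dd e (dd e w) z with hbd
  set r := dd e w z with hrd
  have hsum : ∀ F : EuclideanSpace ℝ (Fin n) → ℝ, dd e F z = ∑ i, c i * dd (v i) F z := by
    intro F
    conv_lhs => rw [hec]
    exact dd_sum _ _ _ _
  have hr1 : ∀ i, dd (v i) (dd e w) z = c i := by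
    intro i
    rw [dd_comm hw, hsum]
    simp [hv]
  have hb2 : ∑ i, c i ^ 2 = b := by
    rw [hbd, hsum]
    exact Finset.sum_congr rfl fun i _ => by rw [hr1, sq]
  have hr2 : r = ∑ i, c i * dd (v i) w z := hsum w
  have hS : ∀ i j, dd e (dd (v i) (dd (v j) w)) z = dd e (dd (v j) (dd (v i) w)) z := by
    intro i j
    rw [dd_comm hw]
  have hy : ∀ i, dd (v i) (dd e (dd e w)) z = ∑ j, c j * dd e (dd (v i) (dd (v j) w)) z := by
    intro i
    rw [dd_comm (dd_smooth hw e), dd_comm hw (v i) e, hsum]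
    refine Finset.sum_congr rfl fun j _ => ?_
    rw [dd_comm (dd_smooth hw (v i)) (v j) e, dd_comm hw (v j)]
  have hq2 : ∀ i, dd (v i) (dd (v i) (dd e (dd e w))) z =
      dd e (dd e (dd (v i) (dd (v i) w))) z := by
    intro i
    rw [dd_comm (dd_smooth hw e) (v i) e, dd_comm hw (v i) e,
      dd_comm (dd_smooth (dd_smooth hw (v i)) e) (v i) e,
      dd_comm (dd_smooth hw (v i)) (v i) e]
  have hr3 : ∀ i, dd (v i) (dd (v i) (dd e w)) z = dd e (dd (v i) (dd (v i) w)) z := by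
    intro i
    rw [dd_comm hw (v i) e, dd_comm (dd_smooth hw (v i)) (v i) e]
  have hsy := sym_ineq (fun i j => dd e (dd (v i) (dd (v j) w)) z) hS c
    (fun i => dd (v i) (dd e (dd e w)) z) b hb hb2 hy
  set y : Fin n → ℝ := fun i => dd (v i) (dd e (dd e w)) z with hyd
  have hone : ∀ i, -dd (v i) w z / p + y i / b + r * c i = 0 ∧
      -1 / p - (-dd (v i) w z / p) ^ 2 +
      (dd e (dd e (dd (v i) (dd (v i) w))) z / b - (y i / b) ^ 2) +
      (c i ^ 2 + r * dd e (dd (v i) (dd (v i) w)) z) ≤ 0 := by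
    intro i
    have hlm : IsLocalMax (fun t : ℝ => (-w (z + t • v i) - η) * dd e (dd e w) (z + t • v i) *
        Real.exp (dd e w (z + t • v i) ^ 2 / 2)) 0 := by
      have hcont : Continuous fun t : ℝ => z + t • v i := by fun_prop
      have h0 : z + (0:ℝ) • v i = z := by simp
      have htt : Filter.Tendsto (fun t : ℝ => z + t • v i) (nhds 0) (nhds z) := by
        have := hcont.tendsto 0
        rwa [h0] at this
      have := htt.eventually hmax
      filter_upwards [this] with t ht
      rw [h0]
      exact ht
    have := onemax (p := fun t => -w (z + t • v i) - η) (p' := fun t => -dd (v i) w (z + t • v i))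
      (q := fun t => dd e (dd e w) (z + t • v i))
      (q' := fun t => dd (v i) (dd e (dd e w)) (z + t • v i))
      (r := fun t => dd e w (z + t • v i)) (r' := fun t => dd (v i) (dd e w) (z + t • v i))
      (fun t => ((dd_line hw z (v i) t).neg).sub_const η)
      ((dd_line (dd_smooth hw (v i)) z (v i) 0).neg)
      (fun t => dd_line (dd_smooth (dd_smooth hw e) e) z (v i) t)
      (dd_line (dd_smooth (dd_smooth (dd_smooth hw e) e) (v i)) z (v i) 0)
      (fun t => dd_line (dd_smooth hw e) z (v i) t)
      (dd_line (dd_smooth (dd_smooth hw e) (v i)) z (v i) 0)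
      (by simp only [zero_smul, add_zero]; exact hp) (by simp only [zero_smul, add_zero]; exact hb) hlm
    simp only [zero_smul, add_zero, hr1, hq2, hr3, hv, if_true] at this
    exact this
  have hwi : ∀ i, dd (v i) w z / p = y i / b + r * c i := by
    intro i
    have := (hone i).1
    rw [neg_div] at this
    linarith
  have hsumle := Finset.sum_nonpos (s := Finset.univ) fun i _ => (hone i).2
  have hterm : ∀ i, -1 / p - (-dd (v i) w z / p) ^ 2 +
      (dd e (dd e (dd (v i) (dd (v i) w))) z / b - (y i / b) ^ 2) +
      (c i ^ 2 + r * dd e (dd (v i) (dd (v i) w)) z) =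
      -1 / p - 2 / b ^ 2 * y i ^ 2 - 2 * r / b * (c i * y i) - r ^ 2 * c i ^ 2 +
      1 / b * dd e (dd e (dd (v i) (dd (v i) w))) z + c i ^ 2 +
      r * dd e (dd (v i) (dd (v i) w)) z := by
    intro i
    rw [neg_div p (dd (v i) w z), neg_sq, hwi i]
    field_simp
    ring
  simp only [hterm, Finset.sum_add_distrib, Finset.sum_sub_distrib, ← Finset.mul_sum, hb2, ht1]
    at hsumle
  simp only [Finset.sum_const, Finset.card_univ, Fintype.card_fin, nsmul_eq_mul, mul_zero,
    add_zero] at hsumle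
  set Y := ∑ i, y i ^ 2
  set Q := ∑ i, c i * y i with hQ
  have hrp : r / p = Q / b + r * b := by
    rw [hr2, Finset.sum_div]
    have : ∀ i, c i * dd (v i) w z / p = (c i * y i) / b + r * c i ^ 2 := by
      intro i
      rw [mul_div_assoc, hwi]; ring
    simp only [this, Finset.sum_add_distrib, ← Finset.sum_div, ← Finset.mul_sum, hb2, ← hQ, ← hr2]
  have h5 := hsy.trans ht2
  set T := ∑ i, dd e (dd e (dd (v i) (dd (v i) w))) z
  have h6 : 1 / b * (2 * Y / b - Q ^ 2 / b ^ 2) ≤ 1 / b * T :=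
    mul_le_mul_of_nonneg_left h5 (by positivity)
  have h7 : 1 / b * (2 * Y / b - Q ^ 2 / b ^ 2) - 2 / b ^ 2 * Y - 2 * r / b * Q - r ^ 2 * b
      = - ((Q / b + r * b) ^ 2 / b) := by
    field_simp
    ring
  rw [← hrp] at h7
  have h8 : b ≤ n / p + (r / p) ^ 2 / b := by
    have : (n:ℝ) * (-1 / p) = - (n / p) := by ring
    linarith
  have h9 := mul_le_mul_of_nonneg_left h8 (show 0 ≤ p ^ 2 * b by positivity)
  have h10 : p ^ 2 * b * (n / p + (r / p) ^ 2 / b) = n * (p * b) + r ^ 2 := by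
    field_simp
  rw [h10] at h9
  linarith [h9, show p ^ 2 * b * b = (p * b) ^ 2 by ring]

theorem second_bound {n : ℕ} {w : EuclideanSpace ℝ (Fin n) → ℝ} {R G δ : ℝ}
    (hw : ContDiff ℝ (⊤ : ℕ∞) w) (hc : ConvexOn ℝ Set.univ w)
    (hdet : ∀ x, w x < 0 → (hessianMatrix w x).det = 1)
    (hR : {x | w x < 0} ⊆ Metric.ball (0 : EuclideanSpace ℝ (Fin n)) R)
    (hδ : 0 < δ) (hG : 0 ≤ G)
    (hgrad : ∀ x, w x ≤ -(δ / 2) → ∀ v, ‖v‖ = 1 → |dd v w x| ≤ G)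
    (x : EuclideanSpace ℝ (Fin n)) (hx : w x < -δ) (e : EuclideanSpace ℝ (Fin n)) (he : ‖e‖ = 1) :
    dd e (dd e w) x ≤ 2 / δ * ((n + G) * Real.exp (G ^ 2 / 2)) := by
  by_cases hbx : dd e (dd e w) x ≤ 0
  · exact hbx.trans (by positivity)
  push Not at hbx
  set Ψ : EuclideanSpace ℝ (Fin n) → ℝ :=
    fun x => (-w x - δ / 2) * dd e (dd e w) x * Real.exp (dd e w x ^ 2 / 2) with hΨ
  have hΨc : Continuous Ψ := by
    have h1 := hw.continuous
    have h2 := (dd_smooth hw e).continuous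
    have h3 := (dd_smooth (dd_smooth hw e) e).continuous
    fun_prop
  have hcl : IsClosed {x | w x ≤ -(δ / 2)} := isClosed_le hw.continuous continuous_const
  have hbd : Bornology.IsBounded {x | w x ≤ -(δ / 2)} := by
    refine Metric.isBounded_ball.subset (Set.Subset.trans ?_ hR)
    intro y hy
    have : w y ≤ -(δ / 2) := hy
    show w y < 0
    linarith
  have hcomp := Metric.isCompact_of_isClosed_isBounded hcl hbd
  have hxS : x ∈ {x | w x ≤ -(δ / 2)} := by
    show w x ≤ -(δ / 2)
    linarith
  obtain ⟨z, hz, hmax⟩ := hcomp.exists_isMaxOn ⟨x, hxS⟩ hΨc.continuousOn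
  have hz' : w z ≤ -(δ / 2) := hz
  have hxz : Ψ x ≤ Ψ z := hmax hxS
  have hxl : δ / 2 * dd e (dd e w) x ≤ Ψ x := by
    have h1 : 1 ≤ Real.exp (dd e w x ^ 2 / 2) := Real.one_le_exp (by positivity)
    have h2 : δ / 2 * dd e (dd e w) x ≤ (-w x - δ / 2) * dd e (dd e w) x :=
      mul_le_mul_of_nonneg_right (by linarith) hbx.le
    have h3 : 0 < δ / 2 * dd e (dd e w) x := by positivity
    have := le_mul_of_one_le_right (h3.le.trans h2) h1
    exact h2.trans this
  have hΨz : 0 < Ψ z := lt_of_lt_of_le (by positivity) (hxl.trans hxz)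
  have hprod : 0 < (-w z - δ / 2) * dd e (dd e w) z := pos_of_mul_pos_left hΨz (Real.exp_pos _).le
  have hbz0 := hess_nonneg hw hc z e
  have hp : 0 < -w z - δ / 2 := pos_of_mul_pos_left hprod hbz0
  have hb : 0 < dd e (dd e w) z := pos_of_mul_pos_right hprod hp.le
  have hlm : IsLocalMax Ψ z := by
    refine hmax.isLocalMax ?_
    have : {x | w x < -(δ / 2)} ∈ nhds z :=
      (isOpen_lt hw.continuous continuous_const).mem_nhds (show w z < -(δ / 2) by linarith)
    refine Filter.mem_of_superset this ?_
    intro y hy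
    have hy' : w y < -(δ / 2) := hy
    exact hy'.le
  have hcore := core hw hc hdet z e (by linarith) (δ / 2) hp hb hlm
  have hrG := hgrad z hz' e he
  have hr2 : dd e w z ^ 2 ≤ G ^ 2 := by
    rw [← sq_abs]
    exact pow_le_pow_left₀ (abs_nonneg _) hrG 2
  set h := (-w z - δ / 2) * dd e (dd e w) z with hh
  have hhle : h ≤ n + G := by
    by_contra hcon
    push Not at hcon
    have hn0 : (0:ℝ) ≤ n := Nat.cast_nonneg n
    nlinarith
  have hfin : Ψ z ≤ (n + G) * Real.exp (G ^ 2 / 2) := by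
    have h1 : Real.exp (dd e w z ^ 2 / 2) ≤ Real.exp (G ^ 2 / 2) :=
      Real.exp_le_exp.2 (by linarith)
    exact mul_le_mul hhle h1 (Real.exp_pos _).le (by positivity)
  have hlast := hxl.trans (hxz.trans hfin)
  have : dd e (dd e w) x = 2 / δ * (δ / 2 * dd e (dd e w) x) := by field_simp
  rw [this]
  exact mul_le_mul_of_nonneg_left hlast (by positivity)

theorem norm_bound {n : ℕ} {w : EuclideanSpace ℝ (Fin n) → ℝ} {C : ℝ}
    (hw : ContDiff ℝ (⊤ : ℕ∞) w) (hc : ConvexOn ℝ Set.univ w) (hC : 0 < C)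
    (x : EuclideanSpace ℝ (Fin n))
    (h : ∀ e, ‖e‖ = 1 → dd e (dd e w) x ≤ C) :
    ‖Matrix.toEuclideanCLM (𝕜 := ℝ) (hessianMatrix w x)‖ ≤ C := by
  have hq : ∀ v, dd v (dd v w) x ≤ C * ‖v‖ ^ 2 := by
    intro v
    by_cases hv : v = 0
    · subst hv; simp [dd]
    · have hv' : 0 < ‖v‖ := norm_pos_iff.2 hv
      have h1 := h (‖v‖⁻¹ • v) (by rw [norm_smul, norm_inv, norm_norm, inv_mul_cancel₀ hv'.ne'])
      rw [dd_dd hw] at h1 ⊢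
      simp only [map_smul, smul_apply, smul_eq_mul] at h1
      have h2 := mul_le_mul_of_nonneg_right h1 (sq_nonneg ‖v‖)
      have h3 : ‖v‖⁻¹ * (‖v‖⁻¹ * (fderiv ℝ (fderiv ℝ w) x v v)) * ‖v‖ ^ 2 =
        fderiv ℝ (fderiv ℝ w) x v v := by field_simp
      linarith
  refine ContinuousLinearMap.opNorm_le_bound _ hC.le fun y => ?_
  set z := Matrix.toEuclideanCLM (𝕜 := ℝ) (hessianMatrix w x) y with hz
  have h1 : dd z (dd y w) x = ‖z‖ ^ 2 := by
    rw [hess_bilin hw, ← Matrix.inner_toEuclideanCLM, ← hz, real_inner_self_eq_norm_sq]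
  have h2 := hess_nonneg hw hc x (z - C • y)
  have h3 := congrFun (dd_comm hw y z) x
  have h4 := hq z
  have h5 := hq y
  rw [dd_dd hw] at h1 h2 h3 h4 h5
  rw [dd_dd hw] at h3
  simp only [map_sub, map_smul, sub_apply, smul_apply, smul_eq_mul] at h2
  rw [h3, h1] at h2
  have h6 : ‖z‖ ^ 2 ≤ (C * ‖y‖) ^ 2 := by
    have h7 : C * (C * fderiv ℝ (fderiv ℝ w) x y y) ≤ C * (C * (C * ‖y‖ ^ 2)) := by gcongr
    have h8 : C * ‖z‖ ^ 2 ≤ C * (C * ‖y‖) ^ 2 := by nlinarith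
    exact le_of_mul_le_mul_left h8 hC
  exact le_of_sq_le_sq h6 (by positivity)

end Pogo

/-- Pogorelov's interior C² estimate for the Monge–Ampère equation `det D²w = 1`. -/
theorem pogorelov_interior_C2 (n : ℕ) (hn : 2 ≤ n) (κ : ℝ) (hκ : κ ∈ Set.Ioo (0 : ℝ) 1)
    (δ : ℝ) (hδ : 0 < δ) :
    ∃ C : ℝ, 0 < C ∧
      ∀ w : EuclideanSpace ℝ (Fin n) → ℝ,
        ContDiff ℝ (⊤ : ℕ∞) w →
        ConvexOn ℝ Set.univ w →
        (∀ x, w x < 0 → (hessianMatrix w x).det = 1) →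
        Metric.ball (0 : EuclideanSpace ℝ (Fin n)) κ ⊆ {x | w x < 0} →
        {x | w x < 0} ⊆ Metric.ball (0 : EuclideanSpace ℝ (Fin n)) κ⁻¹ →
        ∀ x, w x < -δ → ‖Matrix.toEuclideanCLM (𝕜 := ℝ) (hessianMatrix w x)‖ ≤ C := by
  have hR0 : 0 < κ⁻¹ := inv_pos.2 hκ.1
  obtain ⟨G, hG, hgrad⟩ := Pogo.grad_bound n hn κ⁻¹ (δ / 2) hR0 (half_pos hδ)
  have hn0 : (0:ℝ) < n := by positivity
  have hC : 0 < 2 / δ * ((n + G) * Real.exp (G ^ 2 / 2)) := by positivity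
  refine ⟨_, hC, ?_⟩
  intro w hw hc hdet _ hR x hx
  exact Pogo.norm_bound hw hc hC x fun e he =>
    Pogo.second_bound hw hc hdet hR hδ hG (hgrad w hw hc hdet hR) x hx e he
end

section
/- (Liouville theorem for non-divergence form elliptic equations in the plane) Let λ ∈ (0,1] and let a : ℝ² → (2×2 symmetric matrices) be such that all eigenvalues of a(x) lie in [λ, λ^{-1}] for every x. Let w : ℝ² → ℝ be a smooth function with sup_{x ∈ ℝ²} |∇w(x)| < ∞ satisfying ∑_{i,j} a_{ij}(x) ∂ᵢ∂ⱼw(x) = 0 for every x ∈ ℝ². Then w is affine, i.e. there exist b ∈ ℝ² and c ∈ ℝ with w(x) = ⟨b, x⟩ + c. -/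
open Real

open MeasureTheory Filter Topology

abbrev E2 := EuclideanSpace ℝ (Fin 2)

noncomputable def pd (i : Fin 2) (g : E2 → ℝ) (x : E2) : ℝ :=
  fderiv ℝ g x (EuclideanSpace.single i 1)

lemma pd_smooth {g : E2 → ℝ} (hg : ContDiff ℝ (⊤ : ℕ∞) g) (i : Fin 2) :
    ContDiff ℝ (⊤ : ℕ∞) (pd i g) := by
  have h1 : ContDiff ℝ (⊤ : ℕ∞) (fderiv ℝ g) := hg.fderiv_right (by simp)
  exact h1.clm_apply contDiff_const

lemma pd_comm {g : E2 → ℝ} (hg : ContDiff ℝ (⊤ : ℕ∞) g) (i j : Fin 2) (x : E2) :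
    pd i (pd j g) x = pd j (pd i g) x := by
  have h1 : ContDiff ℝ (⊤ : ℕ∞) (fderiv ℝ g) := hg.fderiv_right (by simp)
  have hd : DifferentiableAt ℝ (fderiv ℝ g) x := h1.differentiable (by simp) x
  have key : ∀ i j : Fin 2, pd i (pd j g) x =
      fderiv ℝ (fderiv ℝ g) x (EuclideanSpace.single i 1) (EuclideanSpace.single j 1) := by
    intro i j
    unfold pd
    rw [fderiv_clm_apply hd (by fun_prop)]
    simp
  rw [key, key]
  exact (hg.contDiffAt.isSymmSndFDerivAt (by simpa using (WithTop.coe_le_coe.2 (le_top : (2 : ℕ∞) ≤ ⊤)))).eq _ _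

lemma pd_mul {f g : E2 → ℝ} (hf : ContDiff ℝ (⊤ : ℕ∞) f) (hg : ContDiff ℝ (⊤ : ℕ∞) g)
    (i : Fin 2) (x : E2) :
    pd i (fun y => f y * g y) x = pd i f x * g x + f x * pd i g x := by
  unfold pd
  rw [fderiv_fun_mul (hf.differentiable (by simp) x) (hg.differentiable (by simp) x)]
  simp
  ring

lemma pd_supp {g : E2 → ℝ} (hg : HasCompactSupport g) (i : Fin 2) :
    HasCompactSupport (pd i g) := by
  have := hg.fderiv (𝕜 := ℝ)
  exact this.comp_left (g := fun L : E2 →L[ℝ] ℝ => L (EuclideanSpace.single i 1)) rfl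

lemma ibp {f g : E2 → ℝ} (hf : ContDiff ℝ (⊤ : ℕ∞) f) (hg : ContDiff ℝ (⊤ : ℕ∞) g)
    (hs : HasCompactSupport g) (i : Fin 2) :
    ∫ x, g x * pd i f x = - ∫ x, pd i g x * f x := by
  apply integral_mul_fderiv_eq_neg_fderiv_mul_of_integrable
  · exact ((pd_smooth hg i).continuous.mul hf.continuous).integrable_of_hasCompactSupport
      (HasCompactSupport.mul_right (pd_supp hs i))
  · exact (hg.continuous.mul (pd_smooth hf i).continuous).integrable_of_hasCompactSupport
      (HasCompactSupport.mul_right hs)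
  · exact (hg.continuous.mul hf.continuous).integrable_of_hasCompactSupport
      (HasCompactSupport.mul_right hs)
  · intro x _; exact hg.differentiable (by simp) x
  · intro x _; exact hf.differentiable (by simp) x

lemma caccio_id {u v φ : E2 → ℝ} (hu : ContDiff ℝ (⊤ : ℕ∞) u) (hv : ContDiff ℝ (⊤ : ℕ∞) v)
    (hφ : ContDiff ℝ (⊤ : ℕ∞) φ) (hs : HasCompactSupport φ) :
    ∫ x, φ x ^ 2 * (pd 1 u x * pd 0 v x - pd 0 u x * pd 1 v x) =
      ∫ x, 2 * φ x * u x * (pd 0 φ x * pd 1 v x - pd 1 φ x * pd 0 v x) := by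
  have hφ2 : ContDiff ℝ (⊤ : ℕ∞) (fun x => φ x * φ x) := hφ.mul hφ
  have hs2 : HasCompactSupport (fun x => φ x * φ x) := hs.mul_right
  have hg : ∀ i, ContDiff ℝ (⊤ : ℕ∞) (fun x => (φ x * φ x) * pd i v x) :=
    fun i => hφ2.mul (pd_smooth hv i)
  have hgs : ∀ i, HasCompactSupport (fun x => (φ x * φ x) * pd i v x) :=
    fun i => hs2.mul_right
  have I1 : ∀ i j, Integrable (fun x => (φ x * φ x) * pd i v x * pd j u x) := fun i j =>
    ((hg i).continuous.mul (pd_smooth hu j).continuous).integrable_of_hasCompactSupport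
      (hgs i).mul_right
  have I2 : ∀ i j, Integrable (fun x => pd j (fun x => (φ x * φ x) * pd i v x) x * u x) :=
    fun i j => ((pd_smooth (hg i) j).continuous.mul hu.continuous).integrable_of_hasCompactSupport
      (pd_supp (hgs i) j).mul_right
  have e1 := ibp hu (hg 0) (hgs 0) 1
  have e2 := ibp hu (hg 1) (hgs 1) 0
  calc _ = ∫ x, ((φ x * φ x) * pd 0 v x * pd 1 u x - (φ x * φ x) * pd 1 v x * pd 0 u x) := by
        congr 1; ext x; ring
    _ = ∫ x, (pd 0 (fun x => (φ x * φ x) * pd 1 v x) x * u x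
          - pd 1 (fun x => (φ x * φ x) * pd 0 v x) x * u x) := by
        rw [integral_sub (I1 0 1) (I1 1 0), integral_sub (I2 1 0) (I2 0 1), e1, e2]; ring
    _ = _ := by
        congr 1; ext x
        rw [pd_mul hφ2 (pd_smooth hv 1), pd_mul hφ2 (pd_smooth hv 0), pd_mul hφ hφ,
          pd_mul hφ hφ, pd_comm hv 0 1]
        ring

lemma exists_cutoff : ∃ B : ℝ, ∀ R : ℝ, 0 < R → ∃ φ : E2 → ℝ,
    ContDiff ℝ (⊤ : ℕ∞) φ ∧ HasCompactSupport φ ∧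
    (∀ x ∈ Metric.ball (0 : E2) R, φ x = 1) ∧
    (∀ x ∈ Metric.ball (0 : E2) R, ∀ i, pd i φ x = 0) ∧
    (∀ x, 0 ≤ φ x ∧ φ x ≤ 1) ∧
    ∫ x, (pd 0 φ x ^ 2 + pd 1 φ x ^ 2) = B := by
  let ψ : ContDiffBump (0 : E2) := ⟨1, 2, by norm_num, by norm_num⟩
  refine ⟨∫ x, (pd 0 ψ x ^ 2 + pd 1 ψ x ^ 2), fun R hR => ?_⟩
  have hψ : ContDiff ℝ (⊤ : ℕ∞) (ψ : E2 → ℝ) := ψ.contDiff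
  have hone : ∀ x ∈ Metric.ball (0 : E2) R, ψ (R⁻¹ • x) = 1 := by
    intro x hx
    apply ψ.one_of_mem_closedBall
    simp only [Metric.mem_ball, dist_zero_right] at hx
    simp only [Metric.mem_closedBall, dist_zero_right, norm_smul, norm_inv, Real.norm_eq_abs,
      abs_of_pos hR]
    change R⁻¹ * ‖x‖ ≤ 1
    rw [inv_mul_le_iff₀ hR]; linarith
  have hpd : ∀ i x, pd i (fun x => ψ (R⁻¹ • x)) x = R⁻¹ * pd i ψ (R⁻¹ • x) := by
    intro i x
    unfold pd
    have h1 : HasFDerivAt (ψ : E2 → ℝ) (fderiv ℝ ψ (R⁻¹ • x)) (R⁻¹ • x) :=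
      (hψ.differentiable (by simp) _).hasFDerivAt
    have h2 : HasFDerivAt (fun x : E2 => R⁻¹ • x) (R⁻¹ • ContinuousLinearMap.id ℝ E2) x :=
      (hasFDerivAt_id x).const_smul R⁻¹
    have h3 := (h1.comp x h2).fderiv
    change fderiv ℝ (ψ ∘ fun x : E2 => R⁻¹ • x) x _ = _
    rw [h3]
    simp
  refine ⟨fun x => ψ (R⁻¹ • x), ?_, ?_, hone, ?_, fun x => ⟨ψ.nonneg, ψ.le_one⟩, ?_⟩
  · exact hψ.comp (contDiff_const_smul _)
  · exact ψ.hasCompactSupport.comp_smul (inv_ne_zero hR.ne')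
  · intro x hx i
    unfold pd
    have : (fun x => ψ (R⁻¹ • x)) =ᶠ[𝓝 x] fun _ => (1 : ℝ) := by
      filter_upwards [Metric.isOpen_ball.mem_nhds hx] with y hy using hone y hy
    rw [this.fderiv_eq]; simp
  · simp only [hpd]
    have := Measure.integral_comp_inv_smul_of_nonneg (volume : Measure E2)
      (fun x => R⁻¹ ^ 2 * (pd 0 ψ x ^ 2 + pd 1 ψ x ^ 2)) hR.le
    simp only [finrank_euclideanSpace, Fintype.card_fin, smul_eq_mul, integral_const_mul] at this
    rw [← mul_assoc, ← mul_pow, mul_inv_cancel₀ hR.ne', one_pow, one_mul] at this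
    rw [← this, ← integral_const_mul]
    congr 1; ext x; ring

lemma young (t A X Y : ℝ) (ht : 0 < t) : 2 * X * Y * A ≤ t * (X ^ 2 * A ^ 2) + t⁻¹ * Y ^ 2 := by
  have h : 0 ≤ t⁻¹ * (t * (X * A) - Y) ^ 2 := by positivity
  have e : t⁻¹ * (t * (X * A) - Y) ^ 2
      = t * (X ^ 2 * A ^ 2) + t⁻¹ * Y ^ 2 - 2 * X * Y * A := by
    field_simp
    ring
  linarith

lemma young2 {t p u C a b c d : ℝ} (ht : 0 < t) (hu : u ^ 2 ≤ C) :
    2 * p * u * (a * b - c * d) ≤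
      t * (p ^ 2 * (d ^ 2 + b ^ 2)) + t⁻¹ * C * (a ^ 2 + c ^ 2) := by
  have h1 := young t b p (u * a) ht
  have h2 := young t d p (-(u * c)) ht
  have h3 : t⁻¹ * (u ^ 2 * (a ^ 2 + c ^ 2)) ≤ t⁻¹ * (C * (a ^ 2 + c ^ 2)) := by gcongr
  nlinarith

lemma det_zero {u v : E2 → ℝ} (hu : ContDiff ℝ (⊤ : ℕ∞) u) (hv : ContDiff ℝ (⊤ : ℕ∞) v)
    (C K : ℝ) (hK : 0 < K) (hC : ∀ x, u x ^ 2 ≤ C)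
    (hd : ∀ x, pd 0 v x ^ 2 + pd 1 v x ^ 2 ≤ K * (pd 1 u x * pd 0 v x - pd 0 u x * pd 1 v x)) :
    ∀ x, pd 1 u x * pd 0 v x - pd 0 u x * pd 1 v x = 0 := by
  obtain ⟨B, hB⟩ := exists_cutoff
  choose! φ hφ hs hone hzero h01 hint using hB
  set d : E2 → ℝ := fun x => pd 1 u x * pd 0 v x - pd 0 u x * pd 1 v x with hdd
  have hd' : ∀ x, pd 0 v x ^ 2 + pd 1 v x ^ 2 ≤ K * d x := hd
  have hdc : Continuous d := by
    have := (pd_smooth hu 0).continuous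
    have := (pd_smooth hu 1).continuous
    have := (pd_smooth hv 0).continuous
    have := (pd_smooth hv 1).continuous
    fun_prop
  have hd0 : ∀ x, 0 ≤ d x := by
    intro x
    have h1 := hd' x
    have : 0 ≤ K * d x := by nlinarith [sq_nonneg (pd 0 v x), sq_nonneg (pd 1 v x)]
    exact nonneg_of_mul_nonneg_right this hK
  have hC0 : 0 ≤ C := (sq_nonneg _).trans (hC 0)
  have IG : ∀ R, 0 < R → Integrable (fun x => pd 0 (φ R) x ^ 2 + pd 1 (φ R) x ^ 2) := by
    intro R hR
    have h0 := pd_supp (hs R hR) 0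
    have h1 := pd_supp (hs R hR) 1
    have c0 := (pd_smooth (hφ R hR) 0).continuous
    have c1 := (pd_smooth (hφ R hR) 1).continuous
    refine Integrable.add ?_ ?_
    · exact (c0.pow 2).integrable_of_hasCompactSupport (by simpa only [pow_two] using h0.mul_right)
    · exact (c1.pow 2).integrable_of_hasCompactSupport (by simpa only [pow_two] using h1.mul_right)
  have ID : ∀ R, 0 < R → Integrable (fun x => φ R x ^ 2 * d x) := by
    intro R hR
    refine (((hφ R hR).continuous.pow 2).mul hdc).integrable_of_hasCompactSupport ?_
    refine HasCompactSupport.mul_right ?_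
    simpa only [pow_two] using (hs R hR).mul_right
  have IR : ∀ R, 0 < R → Integrable (fun x => 2 * φ R x * u x *
      (pd 0 (φ R) x * pd 1 v x - pd 1 (φ R) x * pd 0 v x)) := by
    intro R hR
    have c0 := (pd_smooth (hφ R hR) 0).continuous
    have c1 := (pd_smooth (hφ R hR) 1).continuous
    have c2 := (pd_smooth hv 0).continuous
    have c3 := (pd_smooth hv 1).continuous
    have c4 := (hφ R hR).continuous
    have c5 := hu.continuous
    refine Continuous.integrable_of_hasCompactSupport (by fun_prop) ?_
    refine HasCompactSupport.mul_right (HasCompactSupport.mul_right ?_)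
    exact (hs R hR).mul_left (f := fun _ => (2 : ℝ))
  have ball_le : ∀ R, 0 < R → ∫ x in Metric.ball (0 : E2) R, d x ≤ ∫ x, φ R x ^ 2 * d x := by
    intro R hR
    rw [← integral_indicator measurableSet_ball]
    refine integral_mono_of_nonneg ?_ (ID R hR) ?_
    · exact ae_of_all _ fun x => Set.indicator_nonneg (fun y _ => hd0 y) x
    · refine ae_of_all _ fun x => ?_
      by_cases hx : x ∈ Metric.ball (0 : E2) R
      · simp [Set.indicator_of_mem hx, hone R hR x hx]
      · rw [Set.indicator_of_notMem hx]
        have := hd0 x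
        positivity
  have hid := fun R hR => caccio_id hu hv (hφ R hR) (hs R hR)
  -- first step
  have step1 : ∀ R, 0 < R → ∫ x, φ R x ^ 2 * d x ≤ 2 * ((2 * K) * C * B) := by
    intro R hR
    have : ∫ x, φ R x ^ 2 * d x ≤
        ∫ x, ((1 / 2) * (φ R x ^ 2 * d x)
          + (2 * K) * C * (pd 0 (φ R) x ^ 2 + pd 1 (φ R) x ^ 2)) := by
      rw [hid R hR]
      refine integral_mono (IR R hR) (((ID R hR).const_mul _).add ((IG R hR).const_mul _)) ?_
      intro x
      have h := young2 (t := (2 * K)⁻¹) (p := φ R x) (a := pd 0 (φ R) x) (b := pd 1 v x)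
        (c := pd 1 (φ R) x) (d := pd 0 v x) (by positivity) (hC x)
      rw [inv_inv] at h
      have h2 : (2 * K)⁻¹ * (φ R x ^ 2 * (pd 0 v x ^ 2 + pd 1 v x ^ 2)) ≤
          (2 * K)⁻¹ * (φ R x ^ 2 * (K * d x)) := by
        gcongr
        exact hd' x
      have h3 : (2 * K)⁻¹ * (φ R x ^ 2 * (K * d x)) = (1 / 2) * (φ R x ^ 2 * d x) := by
        field_simp
      simp only
      linarith
    rw [integral_add ((ID R hR).const_mul _) ((IG R hR).const_mul _), integral_const_mul,
      integral_const_mul, hint R hR] at this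
    linarith
  have hr : Tendsto (fun n : ℕ => (n : ℝ) + 1) atTop atTop :=
    tendsto_atTop_add_const_right _ _ tendsto_natCast_atTop_atTop
  have hpos : ∀ n : ℕ, (0 : ℝ) < (n : ℝ) + 1 := fun n => by positivity
  have hcov := aecover_ball (μ := (volume : Measure E2)) (x := (0 : E2)) hr
  have hInt : Integrable d := by
    refine hcov.integrable_of_integral_bounded_of_nonneg_ae (2 * ((2 * K) * C * B)) ?_
      (ae_of_all _ hd0) ?_
    · intro n
      exact (hdc.continuousOn.integrableOn_compact
        (isCompact_closedBall (0 : E2) ((n : ℝ) + 1))).mono_set Metric.ball_subset_closedBall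
    · exact Eventually.of_forall fun n => (ball_le _ (hpos n)).trans (step1 _ (hpos n))
  have hlim := hcov.integral_tendsto_of_countably_generated hInt
  have step2 : ∀ t, 0 < t → ∀ R, 0 < R → ∫ x in Metric.ball (0 : E2) R, d x ≤
      t * K * ((∫ x, d x) - ∫ x in Metric.ball (0 : E2) R, d x) + t⁻¹ * C * B := by
    intro t ht R hR
    refine (ball_le R hR).trans ?_
    have hcompl : (∫ x, d x) - ∫ x in Metric.ball (0 : E2) R, d x =
        ∫ x, (Metric.ball (0 : E2) R)ᶜ.indicator d x := by
      rw [integral_indicator measurableSet_ball.compl,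
        ← integral_add_compl measurableSet_ball hInt]
      ring
    have Iind : Integrable ((Metric.ball (0 : E2) R)ᶜ.indicator d) :=
      hInt.indicator measurableSet_ball.compl
    rw [hcompl, ← hint R hR, ← integral_const_mul, ← integral_const_mul,
      ← integral_add (Iind.const_mul _) ((IG R hR).const_mul _), hid R hR]
    refine integral_mono (IR R hR) ((Iind.const_mul _).add ((IG R hR).const_mul _)) ?_
    intro x
    by_cases hx : x ∈ Metric.ball (0 : E2) R
    · simp [hzero R hR x hx, hx]
    · have hx' : x ∈ (Metric.ball (0 : E2) R)ᶜ := hx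
      simp only [Set.indicator_of_mem hx']
      have h := young2 (t := t) (p := φ R x) (a := pd 0 (φ R) x) (b := pd 1 v x)
        (c := pd 1 (φ R) x) (d := pd 0 v x) ht (hC x)
      have h2 : t * (φ R x ^ 2 * (pd 0 v x ^ 2 + pd 1 v x ^ 2)) ≤ t * (1 * (K * d x)) := by
        gcongr
        · exact pow_le_one₀ (h01 R hR x).1 (h01 R hR x).2
        · exact hd' x
      linarith
  have step3 : ∀ t, 0 < t → ∫ x, d x ≤ t⁻¹ * C * B := by
    intro t ht
    have hR := ((hlim.const_sub (∫ x, d x)).const_mul (t * K)).add_const (t⁻¹ * C * B)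
    have := le_of_tendsto_of_tendsto' hlim hR fun n => step2 t ht _ (hpos n)
    simpa using this
  have hle : ∫ x, d x ≤ 0 := by
    have h1 : Tendsto (fun t : ℝ => t⁻¹ * C * B) atTop (𝓝 (0 * C * B)) :=
      (tendsto_inv_atTop_zero.mul_const C).mul_const B
    rw [zero_mul, zero_mul] at h1
    refine ge_of_tendsto h1 ?_
    filter_upwards [eventually_gt_atTop 0] with t ht using step3 t ht
  have h0 : ∫ x, d x = 0 := le_antisymm hle (integral_nonneg hd0)
  have hae := (integral_eq_zero_iff_of_nonneg hd0 hInt).1 h0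
  have := (hdc.ae_eq_iff_eq volume continuous_const).1 hae
  intro x
  exact congrFun this x

lemma const_of_pd {g : E2 → ℝ} (hg : ContDiff ℝ (⊤ : ℕ∞) g) (h : ∀ i x, pd i g x = 0) :
    ∀ x, g x = g 0 := by
  intro x
  refine is_const_of_fderiv_eq_zero (𝕜 := ℝ) (hg.differentiable (by simp)) (fun y => ?_) x 0
  have : (fderiv ℝ g y : E2 →ₗ[ℝ] ℝ) = 0 := by
    refine (EuclideanSpace.basisFun (Fin 2) ℝ).toBasis.ext fun i => ?_
    simpa [pd] using h i y
  ext z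
  exact congrArg (fun L : E2 →ₗ[ℝ] ℝ => L z) this

theorem liouville_nondivergence_plane (lam : ℝ) (hlam : lam ∈ Set.Ioc (0 : ℝ) 1)
    (a : EuclideanSpace ℝ (Fin 2) → Matrix (Fin 2) (Fin 2) ℝ)
    (hasym : ∀ x, (a x).IsSymm)
    (haelliptic : ∀ x (ξ : Fin 2 → ℝ),
      lam * (∑ i, ξ i ^ 2) ≤ ∑ i, ∑ j, a x i j * ξ i * ξ j ∧
      ∑ i, ∑ j, a x i j * ξ i * ξ j ≤ lam⁻¹ * (∑ i, ξ i ^ 2))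
    (w : EuclideanSpace ℝ (Fin 2) → ℝ)
    (hw : ContDiff ℝ (⊤ : ℕ∞) w)
    (hgrad : ∃ C : ℝ, ∀ x, ‖gradient w x‖ ≤ C)
    (hEqn : ∀ x, ∑ i, ∑ j, a x i j * hessianMatrix w x i j = 0) :
    ∃ (b : Fin 2 → ℝ) (c : ℝ), ∀ x, w x = (∑ i, b i * x i) + c := by
  obtain ⟨C, hC⟩ := hgrad
  have hl := hlam.1
  have hu := pd_smooth hw 0
  have hv := pd_smooth hw 1
  have hub : ∀ x, pd 0 w x ^ 2 ≤ C ^ 2 := by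
    intro x
    have h1 : pd 0 w x = inner ℝ (gradient w x) (EuclideanSpace.single 0 1) := by
      simp [gradient, pd]
    have h2 := abs_real_inner_le_norm (gradient w x) (EuclideanSpace.single (0 : Fin 2) (1 : ℝ))
    rw [← h1] at h2
    simp only [EuclideanSpace.norm_single, norm_one, mul_one] at h2
    exact sq_le_sq.2 ((h2.trans (hC x)).trans (le_abs_self C))
  have alg : ∀ x, lam ^ 2 * (pd 0 (pd 0 w) x ^ 2 + pd 0 (pd 1 w) x ^ 2) ≤
        pd 1 (pd 0 w) x * pd 0 (pd 1 w) x - pd 0 (pd 0 w) x * pd 1 (pd 1 w) x ∧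
      lam ^ 2 * (pd 0 (pd 1 w) x ^ 2 + pd 1 (pd 1 w) x ^ 2) ≤
        pd 1 (pd 0 w) x * pd 0 (pd 1 w) x - pd 0 (pd 0 w) x * pd 1 (pd 1 w) x := by
    intro x
    have hE := hEqn x
    have hH : ∀ i j, hessianMatrix w x i j = pd i (pd j w) x := fun i j => rfl
    have hs : a x 1 0 = a x 0 1 := (hasym x).apply 0 1
    simp only [hH, Fin.sum_univ_two, pd_comm hw 1 0, hs] at hE
    rw [pd_comm hw 1 0]
    set p := pd 0 (pd 0 w) x
    set q := pd 0 (pd 1 w) x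
    set r := pd 1 (pd 1 w) x
    have e0 := haelliptic x ![1, 0]
    have e1 := haelliptic x ![0, 1]
    have e2 := (haelliptic x ![p, q]).1
    have e3 := (haelliptic x ![q, r]).1
    simp [Fin.sum_univ_two, hs] at e0 e1 e2 e3
    have key : ∀ A S D : ℝ, lam ≤ A → A ≤ lam⁻¹ → 0 ≤ S → lam * S ≤ A * D → lam ^ 2 * S ≤ D := by
      intro A S D h1 h2 h3 h4
      have hA : 0 < A := hl.trans_le h1
      have hD : 0 ≤ D := by
        have : 0 ≤ A * D := le_trans (by positivity) h4
        exact nonneg_of_mul_nonneg_right this hA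
      have h5 : A * D ≤ lam⁻¹ * D := mul_le_mul_of_nonneg_right h2 hD
      have h6 : lam * (lam * S) ≤ lam * (lam⁻¹ * D) :=
        mul_le_mul_of_nonneg_left (h4.trans h5) hl.le
      rw [mul_inv_cancel_left₀ hl.ne'] at h6
      linarith
    constructor
    · apply key (a x 1 1) _ _ e1.1 e1.2 (by positivity)
      linear_combination e2 + p * hE
    · apply key (a x 0 0) _ _ e0.1 e0.2 (by positivity)
      linear_combination e3 + r * hE
  have hdet := det_zero hu hv (C ^ 2) (lam ^ 2)⁻¹ (by positivity) hub (by
    intro x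
    rw [← mul_le_mul_iff_right₀ (show 0 < lam ^ 2 by positivity),
      mul_inv_cancel_left₀ (by positivity)]
    exact (alg x).2)
  have hl2 : 0 < lam ^ 2 := by positivity
  have sqz : ∀ s t : ℝ, lam ^ 2 * (s ^ 2 + t ^ 2) ≤ 0 → s = 0 ∧ t = 0 := by
    intro s t h
    have : s ^ 2 + t ^ 2 ≤ 0 := by
      by_contra hc
      push Not at hc
      nlinarith [mul_pos hl2 hc]
    constructor <;> nlinarith [sq_nonneg s, sq_nonneg t]
  have H : ∀ x, (pd 0 (pd 0 w) x = 0 ∧ pd 0 (pd 1 w) x = 0) ∧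
      (pd 0 (pd 1 w) x = 0 ∧ pd 1 (pd 1 w) x = 0) := by
    intro x
    have h := alg x
    rw [hdet x] at h
    exact ⟨sqz _ _ h.1, sqz _ _ h.2⟩
  have cu := const_of_pd hu (by
    intro i x
    fin_cases i
    · exact (H x).1.1
    · exact (pd_comm hw 1 0 x).trans (H x).1.2)
  have cv := const_of_pd hv (by
    intro i x
    fin_cases i
    · exact (H x).1.2
    · exact (H x).2.2)
  let L : E2 →L[ℝ] ℝ := pd 0 w 0 • EuclideanSpace.proj (0 : Fin 2) +
    pd 1 w 0 • EuclideanSpace.proj (1 : Fin 2)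
  have hLv : ∀ x, L x = pd 0 w 0 * x 0 + pd 1 w 0 * x 1 := fun x => rfl
  have hconst := const_of_pd (g := fun x => w x - L x) (hw.sub L.contDiff) (by
    intro i x
    unfold pd
    rw [fderiv_fun_sub (hw.differentiable (by simp) x) L.differentiableAt, L.fderiv]
    change pd i w x - L _ = 0
    rw [hLv]
    fin_cases i
    · simp [cu x]
    · simp [cv x])
  refine ⟨fun i => pd i w 0, w 0, fun x => ?_⟩
  have := hconst x
  simp only [map_zero, sub_zero] at this
  rw [hLv] at this
  rw [Fin.sum_univ_two]
  linarith
end
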